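/- Let G be a finite simple graph such that every vertex of maximum degree Δ(G) lies on one of a collection of pairwise vertex-disjoint cycles in G. Then for every integer k ≥ 2, AT(G □ C_{2k}) ≤ Δ(G) + 1 = Δ(G □ C_{2k}) − 1; in particular ch(G □ C_{2k}) ≤ Δ(G) + 1. -/

import Mathlib

/-!
The graph polynomial of `G □ C_{2k}` is the product of the polynomials of the `2k` copies
(layers) of `G` and of the factors `x_{v,i+1} - x_{v,i}` of the vertical edges. Expanding the
latter, a coefficient of the whole polynomial becomes a sum over cyclic sequences of subsets of
`V`, that is, the trace of a product of `2k` transfer matrices, indexed by subsets of `V`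
(`coeff_cylinderPoly`, `sum_closed_walks_eq_trace`).

Let the exponent be `a` in the even layers and `b = deg + 2 - a` in the odd ones. Choosing the
other end of each edge maps the coefficients of `F_G` at `f` to those at `deg - f` up to a global
sign, so the transfer matrix of `b` is, up to sign, the transpose of the transfer matrix `N` of
`a`. The signs of the vertical edges also combine to a global one, by homogeneity. Hence the
coefficient is `± tr ((N Nᵀ)^k)`, and this is nonzero as soon as `N ≠ 0`
(`signedLayerMat_mul`, `trace_gram_pow_ne_zero`).

The matrix `N` is nonzero whenever `F_G` has a monomial `f` with `f ≤ a ≤ f + 2`. If `Δ(G) ≥ 2`,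
then for any monomial `f` of `F_G` such an `a` can be chosen with both `a` and `b` bounded by
`Δ(G)` (`exists_layerMat_ne_zero`). A vertex of maximum degree lies on a cycle, whence indeed
`Δ(G) ≥ 2`. The bound on the list chromatic number follows by the Combinatorial Nullstellensatz.
-/

open MvPolynomial Finset

/-- An orientation of a simple graph: a finite set of ordered pairs containing,
for each edge `{u, v}` of `G`, exactly one of `(u, v)` and `(v, u)`. -/
structure GraphOrientation {V : Type*} (G : SimpleGraph V) where
  edges : Finset (V × V)
  adj_of_mem : ∀ e ∈ edges, G.Adj e.1 e.2
  mem_iff_not_swap_mem : ∀ u v : V, G.Adj u v → ((u, v) ∈ edges ↔ (v, u) ∉ edges)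

/-- The graph polynomial `∏_{(i,j) ∈ E} (x_j - x_i)` associated to an orientation. -/
noncomputable def graphPoly {V : Type*} {G : SimpleGraph V} (D : GraphOrientation G) :
    MvPolynomial V ℝ :=
  ∏ e ∈ D.edges, (X e.2 - X e.1)

/-- The outdegree of a vertex in an orientation. -/
def GraphOrientation.outDeg {V : Type*} [DecidableEq V] {G : SimpleGraph V}
    (D : GraphOrientation G) (v : V) : ℕ :=
  (D.edges.filter fun e => e.1 = v).card

/-- `G` is `f`-choosable: any assignment of lists of real colors with `|A_v| ≥ f v`
admits a proper coloring from the lists. -/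
def Choosable {V : Type*} (G : SimpleGraph V) (f : V → ℕ) : Prop :=
  ∀ A : V → Finset ℝ, (∀ v, f v ≤ (A v).card) →
    ∃ c : V → ℝ, (∀ v, c v ∈ A v) ∧ ∀ u v : V, G.Adj u v → c u ≠ c v

/-- The list chromatic number. -/
noncomputable def chNumber {V : Type*} (G : SimpleGraph V) : ℕ :=
  sInf {m | Choosable G fun _ => m}

/-- The Alon–Tarsi number: the least `k` such that the graph polynomial has a
monomial `x^d` with nonzero coefficient and `max_v d_v = k - 1`. -/
noncomputable def ATNumber {V : Type*} (G : SimpleGraph V) : ℕ :=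
  sInf {k | ∃ (D : GraphOrientation G) (d : V →₀ ℕ),
    MvPolynomial.coeff d (graphPoly D) ≠ 0 ∧ d.support.sup d + 1 = k}

instance {α β : Type*} {G : SimpleGraph α} {H : SimpleGraph β}
    [DecidableEq α] [DecidableEq β] [DecidableRel G.Adj] [DecidableRel H.Adj] :
    DecidableRel (G.boxProd H).Adj :=
  fun _ _ => decidable_of_iff _ SimpleGraph.boxProd_adj.symm

/-! ### Closed walks and traces of matrix products -/

/-- The product of the matrices `M 0, …, M (n - 1)`, in this order. -/
noncomputable def matSeqProd {ι : Type*} [Fintype ι] [DecidableEq ι] (M : ℕ → Matrix ι ι ℝ) :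
    ℕ → Matrix ι ι ℝ
  | 0 => 1
  | n + 1 => matSeqProd M n * M n

/-- The entries of a product of `n` matrices as sums over walks with `n` steps. -/
lemma sum_walks_eq {ι : Type*} [Fintype ι] [DecidableEq ι] (M : ℕ → Matrix ι ι ℝ) (n : ℕ)
    (f : ι → ι → ℝ) :
    ∑ p : Fin (n + 1) → ι, f (p 0) (p (Fin.last n)) *
        ∏ j : Fin n, M j (p j.castSucc) (p j.succ) =
      ∑ s, ∑ t, f s t * matSeqProd M n s t := by
  induction n generalizing f with
  | zero =>
    rw [← (Equiv.funUnique (Fin 1) ι).symm.sum_comp]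
    simp [matSeqProd, Matrix.one_apply]
  | succ n ih =>
    rw [← (Fin.snocEquiv (fun _ : Fin (n + 2) => ι)).sum_comp, Fintype.sum_prod_type]
    have key : ∀ t : ι, ∑ q : Fin (n + 1) → ι,
        f (q 0) t * ((∏ j : Fin n, M j (q j.castSucc) (q j.succ)) * M n (q (Fin.last n)) t) =
        ∑ s, ∑ r, (f s t * M n r t) * matSeqProd M n s r := by
      intro t
      rw [← ih (fun s r => f s t * M n r t)]
      refine Finset.sum_congr rfl fun q _ => ?_
      ring
    have key2 : ∀ (t : ι) (q : Fin (n + 1) → ι),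
        f ((Fin.snocEquiv (fun _ : Fin (n + 2) => ι)) (t, q) 0)
          ((Fin.snocEquiv (fun _ : Fin (n + 2) => ι)) (t, q) (Fin.last (n + 1))) *
        ∏ j : Fin (n + 1), M j ((Fin.snocEquiv (fun _ : Fin (n + 2) => ι)) (t, q) j.castSucc)
          ((Fin.snocEquiv (fun _ : Fin (n + 2) => ι)) (t, q) j.succ) =
        f (q 0) t * ((∏ j : Fin n, M j (q j.castSucc) (q j.succ)) * M n (q (Fin.last n)) t) := by
      intro t q
      have h0 : (Fin.snoc q t : Fin (n + 2) → ι) 0 = q 0 := by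
        rw [← Fin.castSucc_zero, Fin.snoc_castSucc (α := fun _ => ι)]
      have h1 : ∀ j : Fin (n + 1), (Fin.snoc q t : Fin (n + 2) → ι) j.castSucc = q j :=
        fun j => Fin.snoc_castSucc (α := fun _ => ι) _ _ _
      have h2 : (Fin.snoc q t : Fin (n + 2) → ι) (Fin.last (n + 1)) = t :=
        Fin.snoc_last (α := fun _ => ι) _ _
      simp only [Fin.snocEquiv, Equiv.coe_fn_mk, Fin.prod_univ_castSucc, h0, h1, h2,
        Fin.succ_castSucc, Fin.succ_last, Fin.val_castSucc, Fin.val_last]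
    simp_rw [key2, key]
    rw [Finset.sum_comm]
    refine Finset.sum_congr rfl fun s _ => Finset.sum_congr rfl fun t _ => ?_
    rw [matSeqProd, Matrix.mul_apply, Finset.mul_sum]
    refine Finset.sum_congr rfl fun r _ => ?_
    ring

/-- The sum over closed walks of length `n + 1` is a trace. -/
lemma sum_closed_walks_eq_trace {ι : Type*} [Fintype ι] [DecidableEq ι] (M : ℕ → Matrix ι ι ℝ)
    (n : ℕ) :
    ∑ p : Fin (n + 1) → ι, ∏ j : Fin (n + 1), M j (p j) (p (j + 1)) =
      (matSeqProd M (n + 1)).trace := by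
  have h := sum_walks_eq M n (fun s t => M n t s)
  calc _ = ∑ p : Fin (n + 1) → ι, M n (p (Fin.last n)) (p 0) *
        ∏ j : Fin n, M j (p j.castSucc) (p j.succ) := by
        refine Finset.sum_congr rfl fun p _ => ?_
        rw [Fin.prod_univ_castSucc, mul_comm]
        simp [Fin.coeSucc_eq_succ]
    _ = _ := by
        rw [h]
        simp only [Matrix.trace, matSeqProd, Matrix.diag, Matrix.mul_apply]
        exact Finset.sum_congr rfl fun s _ => Finset.sum_congr rfl fun t _ => mul_comm _ _

lemma matSeqProd_alternating {ι : Type*} [Fintype ι] [DecidableEq ι] (A B : Matrix ι ι ℝ)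
    (k : ℕ) : matSeqProd (fun j => if j % 2 = 0 then A else B) (2 * k) = (A * B) ^ k := by
  induction k with
  | zero => simp [matSeqProd]
  | succ k ih =>
    rw [show 2 * (k + 1) = 2 * k + 1 + 1 by ring, matSeqProd, matSeqProd, ih, pow_succ]
    have : (2 * k + 1) % 2 ≠ 0 := by omega
    simp [Matrix.mul_assoc]

/-- Powers of the nonzero positive semidefinite matrix `N Nᵀ` have nonzero trace. -/
lemma trace_gram_pow_ne_zero {ι : Type*} [Fintype ι] [DecidableEq ι] (N : Matrix ι ι ℝ)
    (hN : N ≠ 0) (k : ℕ) : ((N * N.transpose) ^ k).trace ≠ 0 := by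
  rcases eq_or_ne k 0 with rfl | hk
  · have : Nonempty ι := by
      by_contra h
      rw [not_nonempty_iff] at h
      exact hN (Subsingleton.elim _ _)
    simp
  have hps : (N * N.transpose).PosSemidef := by
    simpa using Matrix.posSemidef_self_mul_conjTranspose N
  intro h0
  have hz : (N * N.transpose) ^ k = 0 := (hps.pow k).trace_eq_zero_iff.1 h0
  have hA : N * N.transpose ≠ 0 := by
    intro h
    apply hN
    rwa [← Matrix.conjTranspose_eq_transpose_of_trivial,
      Matrix.self_mul_conjTranspose_eq_zero] at h
  -- A symmetric matrix squaring to zero vanishes, so no power `A ^ (2 ^ n)` of a nonzero one does.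
  have hpow : ∀ n : ℕ, (N * N.transpose) ^ (2 ^ n) ≠ 0 := by
    intro n
    induction n with
    | zero => simpa using hA
    | succ n ih =>
      intro h
      apply ih
      have hs : ((N * N.transpose) ^ (2 ^ n)).conjTranspose = (N * N.transpose) ^ (2 ^ n) :=
        (hps.pow _).1
      rw [← Matrix.self_mul_conjTranspose_eq_zero, hs, ← pow_two, ← pow_mul, ← pow_succ, h]
  exact hpow k (pow_eq_zero_of_le Nat.lt_two_pow_self.le hz)

/-! ### Coefficients of graph polynomials -/

/-- The indicator exponent of a finite set of variables. -/
noncomputable def indExp {V : Type*} (S : Finset V) : V →₀ ℕ := ∑ v ∈ S, Finsupp.single v 1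

lemma indExp_apply {V : Type*} [DecidableEq V] (S : Finset V) (v : V) :
    indExp S v = if v ∈ S then 1 else 0 := by
  simp [indExp, Finsupp.finsetSum_apply, Finsupp.single_apply]

lemma degree_indExp {V : Type*} (S : Finset V) : (indExp S).degree = S.card := by
  simp [indExp, map_sum]

lemma monomial_indExp {V : Type*} (S : Finset V) :
    (monomial (indExp S) 1 : MvPolynomial V ℝ) = ∏ v ∈ S, X v := by
  rw [indExp, monomial_sum_one]; rfl

/-- The graph polynomial of a finite set of arcs. -/
noncomputable def arcPoly {V : Type*} (E : Finset (V × V)) : MvPolynomial V ℝ :=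
  ∏ e ∈ E, (X e.2 - X e.1)

/-- The exponent of the term of `arcPoly E` that takes the head of each arc in `O`
and the tail of each arc in `E \ O`. -/
noncomputable def choiceExp {V : Type*} [DecidableEq V] (E O : Finset (V × V)) : V →₀ ℕ :=
  ∑ e ∈ O, Finsupp.single e.2 1 + ∑ e ∈ E \ O, Finsupp.single e.1 1

/-- The vector of degrees of the underlying undirected graph of a set of arcs. -/
noncomputable def arcDeg {V : Type*} (E : Finset (V × V)) : V →₀ ℕ :=
  ∑ e ∈ E, (Finsupp.single e.1 1 + Finsupp.single e.2 1)

lemma arcPoly_eq_sum {V : Type*} [DecidableEq V] (E : Finset (V × V)) :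
    arcPoly E = ∑ O ∈ E.powerset, monomial (choiceExp E O) ((-1) ^ (E \ O).card) := by
  rw [arcPoly]
  simp_rw [sub_eq_add_neg]
  rw [Finset.prod_add]
  refine Finset.sum_congr rfl fun O _ => ?_
  rw [choiceExp, ← one_mul ((-1 : ℝ) ^ _), ← monomial_mul, monomial_sum_one, monomial_sum_index,
    Finset.prod_neg]
  simp [X]

lemma coeff_monomial_mul_arcPoly {V : Type*} [DecidableEq V] (E : Finset (V × V))
    (w f : V →₀ ℕ) :
    coeff f (monomial w 1 * arcPoly E) =
      ∑ O ∈ E.powerset, if w + choiceExp E O = f then (-1) ^ (E \ O).card else 0 := by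
  rw [arcPoly_eq_sum, Finset.mul_sum, coeff_sum]
  refine Finset.sum_congr rfl fun O _ => ?_
  rw [monomial_mul, coeff_monomial, one_mul]

lemma choiceExp_add_compl {V : Type*} [DecidableEq V] {E O : Finset (V × V)} (h : O ⊆ E) :
    choiceExp E O + choiceExp E (E \ O) = arcDeg E := by
  rw [choiceExp, choiceExp, arcDeg, Finset.sdiff_sdiff_eq_self h, Finset.sum_add_distrib,
    ← Finset.sum_sdiff h, ← Finset.sum_sdiff h (f := fun e => Finsupp.single e.2 1)]
  abel

/-- Reversing the choice made at every arc exchanges the coefficients of complementary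
monomials, up to a global sign. -/
lemma coeff_monomial_mul_arcPoly_symm {V : Type*} [DecidableEq V] (E : Finset (V × V))
    (w w' f g : V →₀ ℕ) (h : w + w' + arcDeg E = f + g) :
    coeff g (monomial w' 1 * arcPoly E) =
      (-1) ^ E.card * coeff f (monomial w 1 * arcPoly E) := by
  rw [coeff_monomial_mul_arcPoly, coeff_monomial_mul_arcPoly, Finset.mul_sum]
  refine Finset.sum_nbij' (fun O => E \ O) (fun O => E \ O)
    (fun O _ => Finset.mem_powerset.2 Finset.sdiff_subset)
    (fun O _ => Finset.mem_powerset.2 Finset.sdiff_subset)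
    (fun O hO => Finset.sdiff_sdiff_eq_self (Finset.mem_powerset.1 hO))
    (fun O hO => Finset.sdiff_sdiff_eq_self (Finset.mem_powerset.1 hO)) ?_
  intro O hO
  have hO := Finset.mem_powerset.1 hO
  have hc := choiceExp_add_compl hO
  have hiff : w' + choiceExp E O = g ↔ w + choiceExp E (E \ O) = f := by
    rw [← hc] at h
    constructor
    · rintro rfl
      exact add_right_cancel (b := w' + choiceExp E O) (by rw [← h]; abel)
    · rintro rfl
      exact add_left_cancel (a := w + choiceExp E (E \ O)) (by rw [← h]; abel)
  simp only [hiff]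
  split_ifs
  · rw [Finset.sdiff_sdiff_eq_self hO, ← Finset.card_sdiff_add_card_eq_card hO, pow_add, mul_assoc,
      ← mul_pow]
    simp
  · simp

lemma arcPoly_isHomogeneous {V : Type*} (E : Finset (V × V)) :
    (arcPoly E).IsHomogeneous E.card := by
  have := IsHomogeneous.prod E (fun e : V × V => (X e.2 - X e.1 : MvPolynomial V ℝ))
    (fun _ => 1) (fun e _ => (isHomogeneous_X ℝ e.2).sub (isHomogeneous_X ℝ e.1))
  simpa [arcPoly] using this

lemma degree_eq_of_coeff_ne_zero {V : Type*} (E : Finset (V × V)) (w f : V →₀ ℕ)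
    (h : coeff f (monomial w 1 * arcPoly E) ≠ 0) : w.degree + E.card = f.degree := by
  have hh := (isHomogeneous_monomial (1 : ℝ) (rfl : w.degree = w.degree)).mul
    (arcPoly_isHomogeneous E)
  by_contra hne
  exact h (hh.coeff_eq_zero fun h' => hne h'.symm)

lemma arcPoly_ne_zero {V : Type*} (E : Finset (V × V)) (hE : ∀ e ∈ E, e.1 ≠ e.2) :
    arcPoly E ≠ 0 := by
  rw [arcPoly, Finset.prod_ne_zero_iff]
  intro e he h
  exact hE e he (X_injective (R := ℝ) (sub_eq_zero.1 h)).symm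

lemma le_arcDeg_of_coeff_ne_zero {V : Type*} [DecidableEq V] (E : Finset (V × V)) (f : V →₀ ℕ)
    (h : coeff f (arcPoly E) ≠ 0) : f ≤ arcDeg E := by
  rw [arcPoly_eq_sum, coeff_sum] at h
  obtain ⟨O, hO, hne⟩ := Finset.exists_ne_zero_of_sum_ne_zero h
  rw [coeff_monomial] at hne
  have hf : choiceExp E O = f := by
    by_contra hh
    simp [hh] at hne
  rw [← hf, ← choiceExp_add_compl (Finset.mem_powerset.1 hO)]
  exact le_self_add

/-- The coefficients of a product of polynomials in disjoint sets of variables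
(indexed here by `i`) are products of coefficients. -/
lemma coeff_prod_rename {V ι : Type*} [DecidableEq V] [Fintype ι] [DecidableEq ι]
    (P : ι → MvPolynomial V ℝ) (c : V × ι →₀ ℕ) (d : ι → V →₀ ℕ) (hc : ∀ v i, c (v, i) = d i v) :
    coeff c (∏ i, rename (fun v => (v, i)) (P i)) = ∏ i, coeff (d i) (P i) := by
  have hinj : ∀ i : ι, Function.Injective (fun v : V => (v, i)) := fun i a b h => by simpa using h
  have hexp : ∏ i, rename (fun v => (v, i)) (P i) =
      ∑ q ∈ Fintype.piFinset (fun i => (P i).support),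
        monomial (∑ i, (q i).mapDomain (fun v => (v, i))) (∏ i, coeff (q i) (P i)) := by
    have h1 : ∀ i, rename (fun v => (v, i)) (P i) = ∑ m ∈ (P i).support,
        monomial (m.mapDomain (fun v => (v, i))) (coeff m (P i)) := by
      intro i
      conv_lhs => rw [(P i).as_sum]
      simp only [map_sum, rename_monomial]
    simp_rw [h1]
    rw [Finset.prod_univ_sum]
    simp_rw [monomial_sum_prod]
  have hval : ∀ (q : ι → V →₀ ℕ) v i,
      (∑ j, (q j).mapDomain (fun v => (v, j))) (v, i) = q i v := by
    intro q v i
    rw [Finsupp.finsetSum_apply, Finset.sum_eq_single i]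
    · exact Finsupp.mapDomain_apply (hinj i) _ _
    · intro j _ hj
      apply Finsupp.mapDomain_of_notMem_range
      rintro ⟨u, hu⟩
      exact hj (Prod.ext_iff.1 hu).2
    · simp
  have hiff : ∀ q : ι → V →₀ ℕ, ∑ j, (q j).mapDomain (fun v => (v, j)) = c ↔ q = d := by
    intro q
    constructor
    · intro h
      funext i
      ext v
      rw [← hc, ← h, hval]
    · rintro rfl
      ext ⟨v, i⟩
      rw [hval, hc]
  rw [hexp, coeff_sum]
  simp_rw [coeff_monomial, hiff]
  rw [Finset.sum_ite_eq']
  split_ifs with h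
  · rfl
  · symm
    simp only [Fintype.mem_piFinset, not_forall, mem_support_iff, not_not] at h
    obtain ⟨i, hi⟩ := h
    exact Finset.prod_eq_zero (Finset.mem_univ i) hi

/-! ### Transfer matrices -/

/-- The transfer matrix of one layer: the entry at `(S, T)` is the coefficient of `x ^ a` in
`arcPoly E`, multiplied by the variables that the layer receives from its two neighbours
(`S` from below, the complement of `T` from above). -/
noncomputable def layerMat {V : Type*} [Fintype V] [DecidableEq V] (E : Finset (V × V))
    (a : V →₀ ℕ) : Matrix (Finset V) (Finset V) ℝ :=
  Matrix.of fun S T => coeff a (monomial (indExp S + indExp Tᶜ) 1 * arcPoly E)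

/-- The transfer matrix with the signs of the vertical arcs. -/
noncomputable def signedLayerMat {V : Type*} [Fintype V] [DecidableEq V] (E : Finset (V × V))
    (a : V →₀ ℕ) : Matrix (Finset V) (Finset V) ℝ :=
  Matrix.of fun S T => (-1) ^ Tᶜ.card * layerMat E a S T

/-- The polynomial of `G □ C_{n+1}`, with the arcs `E` in each layer and the vertical arcs
directed from layer `i` to layer `i + 1`. -/
noncomputable def cylinderPoly {V : Type*} [Fintype V] (E : Finset (V × V)) (n : ℕ) :
    MvPolynomial (V × Fin (n + 1)) ℝ :=
  (∏ i, rename (fun v => (v, i)) (arcPoly E)) *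
    ∏ i : Fin (n + 1), ∏ v : V, (X (v, i + 1) - X (v, i))

/-- Expansion over the sets `p i` of those `v` for which the variable `(v, i)` is chosen
from the vertical arc entering it. -/
lemma cylinderPoly_eq_sum {V : Type*} [Fintype V] [DecidableEq V] (E : Finset (V × V)) (n : ℕ) :
    cylinderPoly E n = ∑ p : Fin (n + 1) → Finset V, ∏ i, rename (fun v => (v, i))
      (C ((-1) ^ (p (i + 1))ᶜ.card) *
        (monomial (indExp (p i) + indExp (p (i + 1))ᶜ) 1 * arcPoly E)) := by
  have hv : ∏ i : Fin (n + 1), ∏ v : V, (X (v, i + 1) - X (v, i) : MvPolynomial _ ℝ) =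
      ∑ p : Fin (n + 1) → Finset V, ∏ i : Fin (n + 1), ((∏ v ∈ p (i + 1), X (v, i + 1)) *
        ((-1) ^ (p (i + 1))ᶜ.card * ∏ v ∈ (p (i + 1))ᶜ, X (v, i))) := by
    simp_rw [sub_eq_add_neg, Fintype.prod_add, Finset.prod_neg]
    rw [Fintype.prod_sum, ← ((Equiv.addRight (1 : Fin (n + 1))).arrowCongr
      (Equiv.refl (Finset V))).symm.sum_comp]
    refine Finset.sum_congr rfl fun p _ => ?_
    rfl
  rw [cylinderPoly, hv, Finset.mul_sum]
  refine Finset.sum_congr rfl fun p _ => ?_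
  rw [Finset.prod_mul_distrib]
  have hs : ∏ i : Fin (n + 1), ∏ v ∈ p (i + 1), (X (v, i + 1) : MvPolynomial (V × Fin (n + 1)) ℝ) =
      ∏ i : Fin (n + 1), ∏ v ∈ p i, X (v, i) :=
    Equiv.prod_comp (Equiv.addRight (1 : Fin (n + 1)))
      (fun i => ∏ v ∈ p i, (X (v, i) : MvPolynomial (V × Fin (n + 1)) ℝ))
  rw [hs, ← Finset.prod_mul_distrib, ← Finset.prod_mul_distrib]
  refine Finset.prod_congr rfl fun i _ => ?_
  have hm : (monomial (indExp (p i) + indExp (p (i + 1))ᶜ) 1 : MvPolynomial V ℝ) =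
      (∏ v ∈ p i, X v) * ∏ v ∈ (p (i + 1))ᶜ, X v := by
    rw [← monomial_indExp, ← monomial_indExp, monomial_mul, one_mul]
  rw [hm]
  simp only [map_mul, map_prod, rename_X, map_pow, map_neg, map_one]
  ring

lemma coeff_cylinderPoly {V : Type*} [Fintype V] [DecidableEq V] (E : Finset (V × V)) (n : ℕ)
    (c : V × Fin (n + 1) →₀ ℕ) (d : Fin (n + 1) → V →₀ ℕ) (hc : ∀ v i, c (v, i) = d i v) :
    coeff c (cylinderPoly E n) = ∑ p : Fin (n + 1) → Finset V,
      ∏ i, signedLayerMat E (d i) (p i) (p (i + 1)) := by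
  rw [cylinderPoly_eq_sum, coeff_sum]
  refine Finset.sum_congr rfl fun p _ => ?_
  rw [coeff_prod_rename _ c d hc]
  simp only [coeff_C_mul, signedLayerMat, layerMat, Matrix.of_apply]

lemma indExp_add_compl {V : Type*} [Fintype V] [DecidableEq V] (S : Finset V) :
    indExp S + indExp Sᶜ = indExp univ := by
  rw [indExp, indExp, indExp, Finset.sum_add_sum_compl]

/-- For complementary exponents `a` and `b`, the product of the two signed transfer matrices is,
up to a global sign, the Gram matrix of the transfer matrix of `a`. The signs of the vertical arcs
become global since a nonzero entry at `(S, T)` determines `|S| - |T|` by homogeneity. -/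
lemma signedLayerMat_mul {V : Type*} [Fintype V] [DecidableEq V] (E : Finset (V × V))
    (a b : V →₀ ℕ) (hab : a + b = arcDeg E + indExp univ + indExp univ) :
    signedLayerMat E a * signedLayerMat E b =
      ((-1 : ℝ) ^ (a.degree + Fintype.card V)) • (layerMat E a * (layerMat E a).transpose) := by
  ext S U
  rw [Matrix.smul_apply, Matrix.mul_apply, Matrix.mul_apply, smul_eq_mul, Finset.mul_sum]
  refine Finset.sum_congr rfl fun T _ => ?_
  have hsym : layerMat E b T U = (-1) ^ E.card * layerMat E a U T := by
    simp only [layerMat, Matrix.of_apply]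
    apply coeff_monomial_mul_arcPoly_symm
    rw [hab, add_assoc (arcDeg E)]
    nth_rewrite 1 [← indExp_add_compl U]
    rw [← indExp_add_compl T]
    abel
  simp only [signedLayerMat, Matrix.of_apply, Matrix.transpose_apply, hsym]
  by_cases h0 : layerMat E a U T = 0
  · simp [h0]
  have hd := degree_eq_of_coeff_ne_zero E _ _ h0
  rw [map_add, degree_indExp, degree_indExp] at hd
  have hU := Finset.card_add_card_compl U
  have hsign : (-1 : ℝ) ^ (a.degree + Fintype.card V) =
      (-1) ^ Tᶜ.card * ((-1) ^ Uᶜ.card * (-1) ^ E.card) := by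
    rw [← pow_add, ← pow_add, neg_one_pow_congr]
    rw [← hd, ← hU]
    simp only [Nat.even_add]
    tauto
  rw [hsign]
  ring

lemma coeff_cylinderPoly_ne_zero {V : Type*} [Fintype V] [DecidableEq V] (E : Finset (V × V))
    (a b : V →₀ ℕ) (hab : a + b = arcDeg E + indExp univ + indExp univ)
    (ha : layerMat E a ≠ 0) (n k : ℕ) (hn : n + 1 = 2 * k) (c : V × Fin (n + 1) →₀ ℕ)
    (hc : ∀ v i, c (v, i) = if (i : ℕ) % 2 = 0 then a v else b v) :
    coeff c (cylinderPoly E n) ≠ 0 := by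
  rw [coeff_cylinderPoly E n c (fun i => if (i : ℕ) % 2 = 0 then a else b)
    (fun v i => by rw [hc]; split_ifs <;> rfl)]
  have h := sum_closed_walks_eq_trace
    (fun j => if j % 2 = 0 then signedLayerMat E a else signedLayerMat E b) n
  rw [congrArg (matSeqProd _) hn, matSeqProd_alternating, signedLayerMat_mul E a b hab, smul_pow, Matrix.trace_smul] at h
  have heq : ∀ i : Fin (n + 1), signedLayerMat E (if (i : ℕ) % 2 = 0 then a else b) =
      if (i : ℕ) % 2 = 0 then signedLayerMat E a else signedLayerMat E b := by
    intro i
    split_ifs <;> rfl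
  simp_rw [heq]
  rw [h]
  exact smul_ne_zero (pow_ne_zero _ (pow_ne_zero _ (by norm_num))) (trace_gram_pow_ne_zero _ ha k)

/-- If all degrees are at most `m ≥ 2`, there are complementary exponents bounded by `m` with
nonzero transfer matrix: any monomial `f` of `arcPoly E` can be moved up by `0`, `1` or `2` in each
variable so that both the result `a` and `deg + 2 - a` are at most `m`. -/
lemma exists_layerMat_ne_zero {V : Type*} [Fintype V] [DecidableEq V] (E : Finset (V × V))
    (hE : ∀ e ∈ E, e.1 ≠ e.2) (m : ℕ) (hm : 2 ≤ m) (hdeg : ∀ v, arcDeg E v ≤ m) :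
    ∃ a b : V →₀ ℕ, a + b = arcDeg E + indExp univ + indExp univ ∧ layerMat E a ≠ 0 ∧
      (∀ v, a v ≤ m) ∧ ∀ v, b v ≤ m := by
  obtain ⟨f, hf⟩ := ne_zero_iff.1 (arcPoly_ne_zero E hE)
  have hfle := le_arcDeg_of_coeff_ne_zero E f hf
  have hfle' : ∀ v, f v ≤ arcDeg E v := fun v => hfle v
  refine ⟨Finsupp.equivFunOnFinite.symm fun v => max (f v) (arcDeg E v + 2 - m),
    Finsupp.equivFunOnFinite.symm fun v => arcDeg E v + 2 - max (f v) (arcDeg E v + 2 - m),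
    ?_, ?_, ?_, ?_⟩
  · ext v
    have := hfle' v
    have := hdeg v
    simp only [Finsupp.add_apply, Finsupp.equivFunOnFinite_symm_apply_apply, indExp_apply,
      Finset.mem_univ, if_true]
    omega
  · intro h
    have h' := congrFun (congrFun h (univ.filter fun v => f v + 1 ≤ arcDeg E v + 2 - m))
      (univ.filter fun v => arcDeg E v + 2 - m ≤ f v + 1)
    simp only [layerMat, Matrix.of_apply, Matrix.zero_apply] at h'
    apply hf
    rw [← h', ← one_mul (coeff f _), ← coeff_monomial_mul]
    congr 1
    ext v
    have := hfle' v
    have := hdeg v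
    simp only [Finsupp.add_apply, Finsupp.equivFunOnFinite_symm_apply_apply, indExp_apply,
      Finset.mem_compl, Finset.mem_filter, Finset.mem_univ, true_and]
    split_ifs <;> omega
  · intro v
    have := hfle' v
    have := hdeg v
    simp only [Finsupp.equivFunOnFinite_symm_apply_apply]
    omega
  · intro v
    simp only [Finsupp.equivFunOnFinite_symm_apply_apply]
    omega

/-! ### Orientations, choosability and degrees of the product -/

lemma arcDeg_le_degree {V : Type*} [Fintype V] [DecidableEq V] {G : SimpleGraph V}
    [DecidableRel G.Adj] (D : GraphOrientation G) (v : V) : arcDeg D.edges v ≤ G.degree v := by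
  have h : arcDeg D.edges v = ((D.edges.filter fun e => e.1 = v).image Prod.snd).card +
      ((D.edges.filter fun e => e.2 = v).image Prod.fst).card := by
    rw [Finset.card_image_of_injOn, Finset.card_image_of_injOn, Finset.card_filter,
      Finset.card_filter, ← Finset.sum_add_distrib, arcDeg, Finsupp.finsetSum_apply]
    · simp [Finsupp.single_apply]
    · rintro ⟨a, b⟩ h1 ⟨c, d⟩ h2 h3
      simp_all
    · rintro ⟨a, b⟩ h1 ⟨c, d⟩ h2 h3
      simp_all
  rw [h, ← Finset.card_union_of_disjoint, ← SimpleGraph.card_neighborFinset_eq_degree]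
  · apply Finset.card_le_card
    intro u hu
    simp only [Finset.mem_union, Finset.mem_image, Finset.mem_filter] at hu
    rw [SimpleGraph.mem_neighborFinset]
    rcases hu with ⟨e, ⟨he, rfl⟩, rfl⟩ | ⟨e, ⟨he, rfl⟩, rfl⟩
    · exact D.adj_of_mem e he
    · exact (D.adj_of_mem e he).symm
  · rw [Finset.disjoint_left]
    intro u hu hu'
    simp only [Finset.mem_image, Finset.mem_filter] at hu hu'
    obtain ⟨⟨x, y⟩, ⟨he, rfl⟩, rfl⟩ := hu
    obtain ⟨⟨x', y'⟩, ⟨he', rfl⟩, rfl⟩ := hu'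
    exact (D.mem_iff_not_swap_mem _ _ (D.adj_of_mem _ he)).1 he he'

lemma exists_graphOrientation {V : Type*} [Fintype V] (G : SimpleGraph V) :
    Nonempty (GraphOrientation G) := by
  classical
  let φ := Fintype.equivFin V
  refine ⟨⟨univ.filter fun e => G.Adj e.1 e.2 ∧ φ e.1 < φ e.2, ?_, ?_⟩⟩
  · intro e he
    exact (Finset.mem_filter.1 he).2.1
  · intro u v huv
    have hne : φ u ≠ φ v := fun h => huv.ne (φ.injective h)
    simp only [Finset.mem_filter, Finset.mem_univ, true_and, huv, huv.symm, not_lt]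
    exact ⟨le_of_lt, fun h => lt_of_le_of_ne h hne⟩

/-- An orientation of `G` extends to `G □ C_{n+3}`: copy it to each layer and go around the
cycle in the positive direction. -/
def cylinderOrientation {V : Type*} [Fintype V] [DecidableEq V] {G : SimpleGraph V}
    (D : GraphOrientation G) (n : ℕ) :
    GraphOrientation (G.boxProd (SimpleGraph.cycleGraph (n + 3))) where
  edges := ((D.edges ×ˢ (univ : Finset (Fin (n + 3)))).image
      fun q => ((q.1.1, q.2), (q.1.2, q.2))) ∪
    ((univ : Finset (Fin (n + 3) × V)).image fun q => ((q.2, q.1), (q.2, q.1 + 1)))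
  adj_of_mem := by
    intro e he
    simp only [Finset.mem_union, Finset.mem_image, Finset.mem_product, Finset.mem_univ, and_true,
      true_and] at he
    rw [SimpleGraph.boxProd_adj]
    rcases he with ⟨q, hq, rfl⟩ | ⟨q, rfl⟩
    · exact Or.inl ⟨D.adj_of_mem _ hq, rfl⟩
    · refine Or.inr ⟨?_, rfl⟩
      rw [SimpleGraph.cycleGraph_adj]
      right
      simp
  mem_iff_not_swap_mem := by
    have h1 : ∀ i : Fin (n + 3), i + 1 ≠ i := by
      intro i h
      simp at h
    have h2 : ∀ i : Fin (n + 3), i + 1 + 1 ≠ i := by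
      intro i h
      rw [add_assoc, add_eq_left] at h
      exact absurd h (ne_of_beq_false rfl)
    have hmem : ∀ u v : V, ∀ i j : Fin (n + 3), (((u, i), (v, j)) ∈
        ((D.edges ×ˢ (univ : Finset (Fin (n + 3)))).image
          fun q => ((q.1.1, q.2), (q.1.2, q.2))) ∪
        ((univ : Finset (Fin (n + 3) × V)).image fun q => ((q.2, q.1), (q.2, q.1 + 1)))) ↔
        ((u, v) ∈ D.edges ∧ i = j) ∨ (u = v ∧ j = i + 1) := by
      intro u v i j
      simp only [Finset.mem_union, Finset.mem_image, Finset.mem_product, Finset.mem_univ,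
        and_true, true_and, Prod.ext_iff]
      constructor
      · rintro (⟨q, hq, h⟩ | ⟨q, h⟩)
        · obtain ⟨⟨x, y⟩, z⟩ := q
          simp only at h hq
          grind
        · grind
      · rintro (⟨h, rfl⟩ | ⟨rfl, rfl⟩)
        · exact Or.inl ⟨((u, v), i), h, by simp⟩
        · exact Or.inr ⟨(i, u), by simp⟩
    rintro ⟨u, i⟩ ⟨v, j⟩ hadj
    rw [hmem, hmem]
    rw [SimpleGraph.boxProd_adj] at hadj
    rcases hadj with ⟨hadj, hij⟩ | ⟨hadj, huv⟩
    · simp only at hadj hij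
      subst hij
      have := D.mem_iff_not_swap_mem u v hadj
      have := hadj.ne
      simp_all
    · simp only at hadj huv
      subst huv
      have hD : (u, u) ∉ D.edges := fun h => (D.adj_of_mem _ h).ne rfl
      rw [SimpleGraph.cycleGraph_adj, sub_eq_iff_eq_add', sub_eq_iff_eq_add'] at hadj
      rcases hadj with rfl | rfl
      · have := h1 j
        have := h2 j
        simp only [hD, false_and, true_and, false_or]
        grind
      · have := h1 i
        have := h2 i
        simp only [hD, false_and, true_and, false_or]
        grind

lemma graphPoly_cylinderOrientation {V : Type*} [Fintype V] [DecidableEq V] {G : SimpleGraph V}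
    (D : GraphOrientation G) (n : ℕ) :
    graphPoly (cylinderOrientation D n) = cylinderPoly D.edges (n + 2) := by
  rw [graphPoly, cylinderOrientation, cylinderPoly, Finset.prod_union, Finset.prod_image,
    Finset.prod_image, Finset.prod_product_right, Fintype.prod_prod_type]
  · simp [arcPoly]
  · rintro ⟨a, b⟩ _ ⟨c, d⟩ _ h
    simp_all
  · rintro ⟨⟨a, b⟩, i⟩ _ ⟨⟨c, d⟩, j⟩ _ h
    simp_all
  · rw [Finset.disjoint_left]
    rintro e he he'
    simp only [Finset.mem_image, Finset.mem_product, Finset.mem_univ, and_true, true_and] at he he'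
    obtain ⟨q, _, rfl⟩ := he
    obtain ⟨q', h⟩ := he'
    simp only [Prod.mk.injEq] at h
    obtain ⟨⟨_, h1⟩, _, h2⟩ := h
    rw [← h1] at h2
    simp at h2

/-- The upper bound `ch ≤ AT` in terms of a single monomial of the graph polynomial, from the
Combinatorial Nullstellensatz. -/
lemma choosable_of_coeff_ne_zero {W : Type*} [Finite W] {H : SimpleGraph W}
    (D : GraphOrientation H) (d : W →₀ ℕ) (hd : coeff d (graphPoly D) ≠ 0) (m : ℕ)
    (hm : ∀ w, d w < m) : Choosable H fun _ => m := by
  intro A hA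
  have hne : graphPoly D ≠ 0 := fun h => hd (by rw [h, coeff_zero])
  have hhom : (graphPoly D).IsHomogeneous D.edges.card := arcPoly_isHomogeneous D.edges
  have hdeg : (graphPoly D).totalDegree = d.degree := by
    rw [hhom.totalDegree hne]
    by_contra h
    exact hd (hhom.coeff_eq_zero fun h' => h h'.symm)
  obtain ⟨s, hs, hs'⟩ := combinatorial_nullstellensatz_exists_eval_nonzero (graphPoly D) d hd hdeg A
    fun w => (hm w).trans_le (hA w)
  refine ⟨s, hs, ?_⟩
  rw [graphPoly, map_prod, Finset.prod_ne_zero_iff] at hs'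
  intro u v huv heq
  by_cases h : (u, v) ∈ D.edges
  · exact hs' _ h (by simp [heq])
  · have h' : (v, u) ∈ D.edges := by
      by_contra h'
      exact h ((D.mem_iff_not_swap_mem u v huv).2 h')
    exact hs' _ h' (by simp [heq])

lemma maxDegree_cylinder {V : Type*} [Fintype V] [DecidableEq V] [Nonempty V]
    (G : SimpleGraph V) [DecidableRel G.Adj] (n : ℕ) :
    (G.boxProd (SimpleGraph.cycleGraph (n + 3))).maxDegree = G.maxDegree + 2 := by
  have hdeg : ∀ (x : V × Fin (n + 3))
      [Fintype ((G.boxProd (SimpleGraph.cycleGraph (n + 3))).neighborSet x)],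
      (G.boxProd (SimpleGraph.cycleGraph (n + 3))).degree x = G.degree x.1 + 2 := by
    intro x _
    rw [SimpleGraph.degree_boxProd, SimpleGraph.cycleGraph_degree_three_le]
  apply le_antisymm
  · apply SimpleGraph.maxDegree_le_of_forall_degree_le
    intro x
    rw [hdeg]
    have := G.degree_le_maxDegree x.1
    omega
  · obtain ⟨v, hv⟩ := G.exists_maximal_degree_vertex
    have h := (G.boxProd (SimpleGraph.cycleGraph (n + 3))).degree_le_maxDegree (v, 0)
    rwa [hdeg, ← hv] at h

lemma two_le_maxDegree_of_isCycle {V : Type*} [Fintype V] [DecidableEq V]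
    (G : SimpleGraph V) [DecidableRel G.Adj] {v : V} (p : G.Walk v v) (hp : p.IsCycle) :
    2 ≤ G.maxDegree := by
  refine le_trans ?_ (G.degree_le_maxDegree v)
  rw [← SimpleGraph.card_neighborFinset_eq_degree, ← Finset.card_pair hp.snd_ne_penultimate]
  apply Finset.card_le_card
  intro u hu
  rw [SimpleGraph.mem_neighborFinset]
  rcases Finset.mem_insert.1 hu with rfl | hu
  · exact p.adj_snd hp.not_nil
  · rw [Finset.mem_singleton.1 hu]
    exact (p.adj_penultimate hp.not_nil).symm

/-- If every vertex of maximum degree of `G` lies on one of a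
collection of pairwise vertex-disjoint cycles in `G`, then for every `k ≥ 2`,
`AT(G □ C_{2k}) ≤ Δ(G) + 1 = Δ(G □ C_{2k}) - 1`; in particular
`ch(G □ C_{2k}) ≤ Δ(G) + 1`. -/
theorem stmt10 {V : Type*} [Fintype V] [DecidableEq V] [Nonempty V]
    (G : SimpleGraph V) [DecidableRel G.Adj]
    (cycles : Set (Σ v : V, G.Walk v v))
    (hcyc : ∀ c ∈ cycles, c.2.IsCycle)
    (hdisj : ∀ c ∈ cycles, ∀ c' ∈ cycles, c ≠ c' →
      ∀ v : V, v ∈ c.2.support → v ∉ c'.2.support)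
    (hcover : ∀ v : V, G.degree v = G.maxDegree → ∃ c ∈ cycles, v ∈ c.2.support)
    (k : ℕ) (hk : 2 ≤ k) :
    ATNumber (G.boxProd (SimpleGraph.cycleGraph (2 * k))) ≤ G.maxDegree + 1 ∧
      G.maxDegree + 1 = (G.boxProd (SimpleGraph.cycleGraph (2 * k))).maxDegree - 1 ∧
      chNumber (G.boxProd (SimpleGraph.cycleGraph (2 * k))) ≤ G.maxDegree + 1 := by
  classical
  obtain ⟨v₀, hv₀⟩ := G.exists_maximal_degree_vertex
  obtain ⟨c₀, hc₀, -⟩ := hcover v₀ hv₀.symm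
  have hΔ := two_le_maxDegree_of_isCycle G c₀.2 (hcyc c₀ hc₀)
  obtain ⟨D⟩ := exists_graphOrientation G
  obtain ⟨a, b, hab, hne, ha, hb⟩ := exists_layerMat_ne_zero D.edges
    (fun e he => (D.adj_of_mem e he).ne) G.maxDegree hΔ
    fun v => (arcDeg_le_degree D v).trans (G.degree_le_maxDegree v)
  obtain ⟨n, hn⟩ : ∃ n, 2 * k = n + 3 := ⟨2 * k - 3, by omega⟩
  have hn' : n + 2 + 1 = 2 * k := hn.symm
  clear hk
  generalize 2 * k = m at hn ⊢
  subst hn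
  -- The exponents alternate between `a` and `b` from layer to layer.
  let c : V × Fin (n + 3) →₀ ℕ := Finsupp.equivFunOnFinite.symm fun x =>
    if (x.2 : ℕ) % 2 = 0 then a x.1 else b x.1
  have hc : ∀ v i, c (v, i) = if (i : ℕ) % 2 = 0 then a v else b v := fun v i => rfl
  have hcle : ∀ x, c x ≤ G.maxDegree := by
    rintro ⟨v, i⟩
    rw [hc]
    split_ifs
    · exact ha v
    · exact hb v
  have hcoeff : coeff c (graphPoly (cylinderOrientation D n)) ≠ 0 := by
    rw [graphPoly_cylinderOrientation]
    exact coeff_cylinderPoly_ne_zero D.edges a b hab hne (n + 2) k hn' c hc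
  refine ⟨?_, ?_, ?_⟩
  · have hmem : c.support.sup c + 1 ∈ {j | ∃ (D' : GraphOrientation
        (G.boxProd (SimpleGraph.cycleGraph (n + 3)))) (d : V × Fin (n + 3) →₀ ℕ),
        coeff d (graphPoly D') ≠ 0 ∧ d.support.sup d + 1 = j} :=
      ⟨cylinderOrientation D n, c, hcoeff, rfl⟩
    refine (Nat.sInf_le hmem).trans ?_
    exact Nat.succ_le_succ (Finset.sup_le fun x _ => hcle x)
  · rw [maxDegree_cylinder]
    rfl
  · exact Nat.sInf_le (choosable_of_coeff_ne_zero _ c hcoeff _ fun x => Nat.lt_succ_of_le (hcle x))
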